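/- Let K be a number field, let Σ be a finite set of nonzero prime ideals of its ring of integers 𝓞_K, let Γ be a finitely generated group, and let ρ : Γ → GL_n(K) be a group homomorphism such that for every nonzero prime ideal p of 𝓞_K with p ∉ Σ and every γ ∈ Γ, all entries of ρ(γ) and of ρ(γ)⁻¹ lie in the localization of 𝓞_K at p. Assume that for each p ∈ Σ there exists an element g of GL_n over an algebraic closure of the p-adic completion K_p such that for every γ ∈ Γ all entries of g·ρ(γ)·g⁻¹ are integral over the valuation ring 𝓞_{K_p} of K_p. Then there exist a finite extension of number fields L/K and an element g ∈ GL_n(L) such that for every γ ∈ Γ, all entries of g·ρ(γ)·g⁻¹ and of its inverse lie in 𝓞_L. -/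

import Mathlib

open Matrix NumberField IsDedekindDomain

/-!
The local hypotheses bound the denominators of `ρ` at the finitely many primes of `S`, so all the
entries of `ρ` have a common denominator. Hence the `𝓞 K`-module spanned by the translates of the
standard basis is finitely generated, being contained in a multiple of the standard lattice, and it
is stable under `ρ`.

Over an algebraic closure `Ω` of `K` the ring `𝓞 Ω` of all algebraic integers is a Bézout domain: an
ideal of a number field becomes principal after adjoining an `h`-th root of a generator of its
`h`-th power, with `h` the class number. Finitely generated lattices over a Bézout domain are free,
so a basis of the lattice generated over `𝓞 Ω` conjugates `ρ` into matrices with integral entries.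
The finitely many coordinates of this basis lie in a finite extension of `K`.
-/

universe u

section Bezout

theorem eq_span_singleton_of_pow_eq {B : Type*} [CommRing B] [IsDomain B] [IsIntegrallyClosed B]
    {J : Ideal B} {b : B} {n : ℕ} (hn : n ≠ 0) (hJ : J ^ n = Ideal.span {b ^ n}) :
    J = Ideal.span {b} := by
  have hle : J ≤ Ideal.span {b} := fun z hz ↦ by
    have hzn : z ^ n ∈ Ideal.span {b ^ n} := hJ ▸ Ideal.pow_mem_pow hz n
    rw [Ideal.mem_span_singleton] at hzn ⊢
    exact (IsIntegrallyClosed.pow_dvd_pow_iff hn).1 hzn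
  obtain rfl | hb := eq_or_ne b 0
  · simpa using hle
  obtain ⟨J', rfl⟩ : ∃ J', J = Ideal.span {b} * J' :=
      ⟨Submodule.comap (LinearMap.mulLeft B b) J, by
        refine (Ideal.eq_span_singleton_mul _ _).2 ⟨fun z hz ↦ ?_, fun z hz ↦ hz⟩
        obtain ⟨c, rfl⟩ := Ideal.mem_span_singleton.1 (hle hz)
        exact ⟨c, hz, rfl⟩⟩
  have hJ' : J' ^ n = ⊤ := by
    rw [← Ideal.span_singleton_mul_right_inj (pow_ne_zero n hb), ← Ideal.span_singleton_pow,
      ← mul_pow, hJ, Ideal.span_singleton_pow, Ideal.mul_top]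
  rw [(Ideal.pow_eq_top_iff.1 hJ').resolve_right hn, Ideal.mul_top]

theorem exists_pow_isPrincipal {A : Type*} [CommRing A] [IsDedekindDomain A] [Finite (ClassGroup A)]
    (I : Ideal A) : ∃ n ≠ 0, (I ^ n).IsPrincipal := by
  obtain rfl | hI := eq_or_ne I ⊥
  · exact ⟨1, one_ne_zero, by rw [pow_one]; infer_instance⟩
  let I' : nonZeroDivisors (Ideal A) := ⟨I, mem_nonZeroDivisors_of_ne_zero hI⟩
  refine ⟨Nat.card (ClassGroup A), Nat.card_pos.ne', ?_⟩
  rw [← ClassGroup.mk0_eq_one_iff (pow_mem I'.2 _)]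
  exact (map_pow ClassGroup.mk0 I' _).trans pow_card_eq_one'

theorem isPrincipal_map_of_finite_classGroup {A B : Type*} [CommRing A] [IsDedekindDomain A]
    [Finite (ClassGroup A)] [CommRing B] [IsDomain B] [IsIntegrallyClosed B]
    (hroot : ∀ n ≠ 0, ∀ a : B, ∃ b, b ^ n = a) (f : A →+* B) (I : Ideal A) :
    (I.map f).IsPrincipal := by
  obtain ⟨n, hn, ⟨a, ha⟩⟩ := exists_pow_isPrincipal I
  obtain ⟨b, hb⟩ := hroot n hn (f a)
  refine ⟨b, eq_span_singleton_of_pow_eq hn ?_⟩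
  rw [← Ideal.map_pow, ha, Ideal.submodule_span_eq, Ideal.map_span, Set.image_singleton, hb]

variable {Ω : Type*} [Field Ω]

theorem exists_pow_eq_ringOfIntegers [IsAlgClosed Ω] {n : ℕ} (hn : n ≠ 0) (a : 𝓞 Ω) :
    ∃ b, b ^ n = a := by
  have hn' := Nat.pos_of_ne_zero hn
  obtain ⟨b, hb⟩ := IsAlgClosed.exists_pow_nat_eq (a : Ω) hn'
  have hbint : IsIntegral ℤ b := .of_pow hn' (hb ▸ a.isIntegral_coe)
  exact ⟨⟨b, hbint⟩, RingOfIntegers.ext ((map_pow (algebraMap (𝓞 Ω) Ω) _ _).trans hb)⟩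

variable [CharZero Ω] [Algebra.IsAlgebraic ℚ Ω]

theorem isFractionRing_ringOfIntegers : IsFractionRing (𝓞 Ω) Ω := by
  have : Algebra.IsAlgebraic ℤ Ω := (IsFractionRing.comap_isAlgebraic_iff (K := ℚ)).2 inferInstance
  exact IsIntegralClosure.isFractionRing_of_algebraic ℤ (𝓞 Ω) (by simp)

theorem isIntegrallyClosed_ringOfIntegers : IsIntegrallyClosed (𝓞 Ω) := by
  have := isFractionRing_ringOfIntegers (Ω := Ω)
  refine (isIntegrallyClosed_iff Ω).2 fun {x} hx ↦ ?_
  exact ⟨⟨x, isIntegral_trans x hx⟩, rfl⟩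

theorem isBezout_ringOfIntegers [IsAlgClosed Ω] : IsBezout (𝓞 Ω) := by
  have := isIntegrallyClosed_ringOfIntegers (Ω := Ω)
  refine IsBezout.iff_span_pair_isPrincipal.2 fun x y ↦ ?_
  let E := IntermediateField.adjoin ℚ {(x : Ω), (y : Ω)}
  have : FiniteDimensional ℚ E :=
    IntermediateField.finiteDimensional_adjoin fun z _ ↦ Algebra.IsIntegral.isIntegral z
  have : NumberField E := ⟨⟩
  have mem_range : ∀ z : 𝓞 Ω, (z : Ω) ∈ E → ∃ z' : 𝓞 E, algebraMap (𝓞 E) (𝓞 Ω) z' = z := by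
    intro z hz
    have hint : IsIntegral ℤ (⟨z, hz⟩ : E) :=
      (isIntegral_algebraMap_iff (algebraMap E Ω).injective).1 z.isIntegral_coe
    exact ⟨⟨_, hint⟩, rfl⟩
  obtain ⟨x', hx'⟩ := mem_range x (IntermediateField.subset_adjoin _ _ (by simp))
  obtain ⟨y', hy'⟩ := mem_range y (IntermediateField.subset_adjoin _ _ (by simp))
  rw [← hx', ← hy', ← Set.image_pair, ← Ideal.map_span]
  exact isPrincipal_map_of_finite_classGroup (fun _ ↦ exists_pow_eq_ringOfIntegers) _ _

end Bezout

section Free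

variable {A F : Type*} [CommRing A] [IsDomain A] [IsBezout A] [Field F] [Algebra A F]
  [IsFractionRing A F]

theorem free_of_fg_of_isFractionRing (P : Submodule A F) (hP : P.FG) : Module.Free A P := by
  let I : FractionalIdeal (nonZeroDivisors A) F := ⟨P, FractionalIdeal.isFractional_of_fg hP⟩
  let e : P ≃ₗ[A] I.num := I.equivNumOfIsLocalization
  have : Module.Finite A P := .of_fg hP
  have : I.num.IsPrincipal := IsBezout.isPrincipal_of_FG _ (Module.Finite.iff_fg.1 (.equiv e))
  have : Module.Free A I.num := by
    obtain h | h := eq_or_ne I.num ⊥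
    · rw [h]; infer_instance
    · exact .of_equiv (Ideal.isoBaseOfIsPrincipal h)
  exact .of_equiv e.symm

theorem free_of_exact {R M N P : Type*} [Ring R] [AddCommGroup M] [AddCommGroup N]
    [AddCommGroup P] [Module R M] [Module R N] [Module R P] [Module.Free R M] [Module.Free R P]
    {f : M →ₗ[R] N} {g : N →ₗ[R] P} (hf : Function.Injective f) (hfg : Function.Exact f g)
    (hg : Function.Surjective g) : Module.Free R N := by
  obtain ⟨s, hs⟩ := Module.projective_lifting_property g .id hg
  obtain ⟨e, -⟩ := hfg.splitSurjectiveEquiv hf ⟨s, hs⟩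
  exact .of_equiv e.symm

theorem free_of_fg_of_finiteDimensional {V : Type*} [AddCommGroup V] [Module F V]
    [FiniteDimensional F V] [Module A V] [IsScalarTower A F V] (N : Submodule A V) (hN : N.FG) :
    Module.Free A N := by
  induction hd : Module.finrank F V using Nat.strong_induction_on generalizing V with
  | _ d ih =>
  obtain h | h := subsingleton_or_nontrivial V
  · infer_instance
  -- A nonzero functional `f` splits `N` as `f(N) ⊕ (N ∩ ker f)`.
  obtain ⟨f, hf⟩ := exists_ne (0 : Module.Dual F V)
  have hlt : Module.finrank F (LinearMap.ker f) < d :=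
    hd ▸ Submodule.finrank_lt (by simpa using hf)
  let g : N →ₗ[A] F := (f.restrictScalars A).domRestrict N
  have : Module.Finite A N := .of_fg hN
  have : Module.Free A (LinearMap.range g) := free_of_fg_of_isFractionRing _ (.of_finite)
  let i : LinearMap.ker g →ₗ[A] LinearMap.ker f :=
    (N.subtype ∘ₗ (LinearMap.ker g).subtype).codRestrict
      ((LinearMap.ker f).restrictScalars A) fun x ↦ x.2
  have hi : Function.Injective i := fun x y hxy ↦ Subtype.ext (Subtype.ext congr($hxy))
  have : Module.Finite A (LinearMap.range g) := .range g
  have := Module.finitePresentation_of_projective A (LinearMap.range g)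
  have hker : (LinearMap.ker g).FG := by
    rw [← LinearMap.ker_rangeRestrict]
    exact Module.FinitePresentation.fg_ker _ g.surjective_rangeRestrict
  have : Module.Finite A (LinearMap.ker g) := .of_fg hker
  have : Module.Free A (LinearMap.range i) := ih _ hlt _ (.of_finite) rfl
  have : Module.Free A (LinearMap.ker g) := .of_equiv (LinearEquiv.ofInjective i hi).symm
  refine free_of_exact (LinearMap.ker g).injective_subtype
    (LinearMap.exact_iff.2 ?_) g.surjective_rangeRestrict
  rw [LinearMap.ker_rangeRestrict, Submodule.range_subtype]

end Free

section Conjugation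

variable {A F ι : Type*} [CommRing A] [Field F] [Algebra A F]

theorem exists_basis_span_eq [IsFractionRing A F] {V : Type*} [AddCommGroup V] [Module F V]
    [Module A V] [IsScalarTower A F V] (e : Module.Basis ι F V) (N : Submodule A V)
    [Submodule.IsLattice F N] [Module.Free A N] :
    ∃ b : Module.Basis ι F V, Submodule.span A (Set.range b) = N := by
  let b := Module.Free.chooseBasis A N
  let B := b.extendOfIsLattice F
  have hB : ⇑B = N.subtype ∘ b := funext (b.extendOfIsLattice_apply F)
  refine ⟨B.reindex (B.indexEquiv e), ?_⟩
  rw [Module.Basis.range_reindex, hB, Set.range_comp, ← Submodule.map_span, b.span_eq,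
    Submodule.map_top, Submodule.range_subtype]

variable [Fintype ι] [DecidableEq ι]

theorem exists_conj_isInteger_of_isLattice [IsDomain A] [IsFractionRing A F]
    (N : Submodule A (ι → F)) [Submodule.IsLattice F N] [Module.Free A N] :
    ∃ g : GL ι F, ∀ M : Matrix ι ι F, (∀ x ∈ N, M *ᵥ x ∈ N) →
      ∀ i j, IsLocalization.IsInteger A ((g * M * g⁻¹ : Matrix ι ι F) i j) := by
  let e := Pi.basisFun F ι
  obtain ⟨b, rfl⟩ := exists_basis_span_eq e N
  refine ⟨⟨b.toMatrix e, e.toMatrix b, b.toMatrix_mul_toMatrix_flip e,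
    e.toMatrix_mul_toMatrix_flip b⟩, fun M hM i j ↦ ?_⟩
  have hconj : b.toMatrix e * M * e.toMatrix b = LinearMap.toMatrix b b (toLin' M) := by
    rw [← basis_toMatrix_mul_linearMap_toMatrix_mul_basis_toMatrix b e b e,
      LinearMap.toMatrix_eq_toMatrix', LinearMap.toMatrix'_toLin']
  have hmem : toLin' M (b j) ∈ Submodule.span A (Set.range b) :=
    hM _ (Submodule.subset_span ⟨j, rfl⟩)
  change IsLocalization.IsInteger A ((b.toMatrix e * M * e.toMatrix b) i j)
  rw [hconj, LinearMap.toMatrix_apply]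
  exact (b.mem_span_iff_repr_mem A _).1 hmem i

end Conjugation

section CommonDenominator

/-- A family `x` of elements of an `A`-field has a common denominator if a single nonzero `d : A`
carries every `x a` into the image of `A`. -/
def HasCommonDenominator (A : Type*) {F α : Type*} [CommRing A] [Field F] [Algebra A F]
    (x : α → F) : Prop :=
  ∃ d : A, d ≠ 0 ∧ ∀ a, IsLocalization.IsInteger A (d • x a)

theorem hasCommonDenominator_of_isIntegral_conj {O F E α ι : Type*} [CommRing O] [IsDomain O]
    [IsIntegrallyClosed O] [Field F] [Field E] [Algebra O F] [IsFractionRing O F] [Algebra F E]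
    [Algebra O E] [IsScalarTower O F E] [Algebra.IsAlgebraic F E] [Fintype ι] [DecidableEq ι]
    (M : α → Matrix ι ι F) (g : GL ι E)
    (hM : ∀ a i j, IsIntegral O ((g * (M a).map (algebraMap F E) * g⁻¹ : Matrix ι ι E) i j)) :
    HasCommonDenominator O fun p : α × ι × ι ↦ M p.1 p.2.1 p.2.2 := by
  classical
  let entries (X : Matrix ι ι E) : Finset E := Finset.univ.image fun p : ι × ι ↦ X p.1 p.2
  have : Algebra.IsAlgebraic O E :=
    (IsFractionRing.comap_isAlgebraic_iff (K := F)).2 inferInstance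
  obtain ⟨d, hd, hint⟩ := Algebra.IsAlgebraic.exists_integral_multiples O
    (entries (g : Matrix ι ι E) ∪ entries (g⁻¹ : GL ι E))
  have hg (i j) : IsIntegral O ((d • (g : Matrix ι ι E)) i j) :=
    hint _ (Finset.mem_union_left _ (Finset.mem_image_of_mem _ (Finset.mem_univ (i, j))))
  have hg' (i j) : IsIntegral O ((d • ((g⁻¹ : GL ι E) : Matrix ι ι E)) i j) :=
    hint _ (Finset.mem_union_right _ (Finset.mem_image_of_mem _ (Finset.mem_univ (i, j))))
  refine ⟨d * d, mul_ne_zero hd hd, fun ⟨a, i, j⟩ ↦ ?_⟩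
  let X : Matrix ι ι E := g * (M a).map (algebraMap F E) * g⁻¹
  have hX : (d • ((g⁻¹ : GL ι E) : Matrix ι ι E)) * X * (d • (g : Matrix ι ι E)) =
      (d * d) • (M a).map (algebraMap F E) := by
    simp [X, mul_assoc, smul_smul]
  have hmul {Y Z : Matrix ι ι E} (hY : ∀ i j, IsIntegral O (Y i j))
      (hZ : ∀ i j, IsIntegral O (Z i j)) (i j) : IsIntegral O ((Y * Z) i j) :=
    .sum _ fun k _ ↦ (hY i k).mul (hZ k j)
  refine IsIntegrallyClosed.isIntegral_iff.1 ?_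
  rw [← isIntegral_algebraMap_iff (algebraMap F E).injective]
  have hsmul : algebraMap F E ((d * d) • M a i j) = ((d * d) • (M a).map (algebraMap F E)) i j :=
    algebraMap.coe_smul _ _ _
  rw [hsmul, ← hX]
  exact hmul (hmul hg' (hM a)) hg i j

section Adic

variable {R K α : Type*} [CommRing R] [IsDedekindDomain R] [Field K] [Algebra R K]
  [IsFractionRing R K] {x : α → K}

theorem HasCommonDenominator.exists_valuation_smul_le_one {v : HeightOneSpectrum R}
    (hx : HasCommonDenominator (v.adicCompletionIntegers K)
      fun a ↦ algebraMap K (v.adicCompletion K) (x a)) :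
    ∃ d : R, d ≠ 0 ∧ ∀ a, v.valuation K (d • x a) ≤ 1 := by
  obtain ⟨c, hc, hcx⟩ := hx
  have hc' : (c : v.adicCompletion K) ≠ 0 := by simpa using hc
  obtain ⟨d, hd, hdc⟩ :=
    HeightOneSpectrum.adicCompletion.mul_nonZeroDivisor_mem_adicCompletionIntegers v
      (c : v.adicCompletion K)⁻¹
  refine ⟨d, nonZeroDivisors.ne_zero hd, fun a ↦ ?_⟩
  obtain ⟨z, hz⟩ := hcx a
  have hdx : algebraMap K (v.adicCompletion K) (d • x a) =
      ((c : v.adicCompletion K)⁻¹ * algebraMap R (v.adicCompletion K) d) * z := by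
    have hz' : (z : v.adicCompletion K) = c * algebraMap K (v.adicCompletion K) (x a) := hz
    rw [hz', Algebra.smul_def, map_mul, ← IsScalarTower.algebraMap_apply]
    field_simp
  rw [← HeightOneSpectrum.valuedAdicCompletion_eq_valuation']
  exact (congrArg Valued.v hdx).trans_le (mul_mem hdc z.2)

theorem hasCommonDenominator_of_adic (S : Finset (HeightOneSpectrum R))
    (hloc : ∀ v ∉ S, ∀ a, v.valuation K (x a) ≤ 1)
    (hS : ∀ v ∈ S, HasCommonDenominator (v.adicCompletionIntegers K)
      fun a ↦ algebraMap K (v.adicCompletion K) (x a)) :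
    HasCommonDenominator R x := by
  classical
  have hex := fun v hv ↦ (hS v hv).exists_valuation_smul_le_one
  choose! d hd hdx using hex
  refine ⟨∏ v ∈ S, d v, Finset.prod_ne_zero_iff.2 hd, fun a ↦ ?_⟩
  refine HeightOneSpectrum.mem_integers_of_valuation_le_one K _ fun v ↦ ?_
  have smul_le_one : ∀ (r : R) {y : K}, v.valuation K y ≤ 1 → v.valuation K (r • y) ≤ 1 := by
    intro r y hy
    rw [Algebra.smul_def, map_mul]
    exact mul_le_one' (v.valuation_le_one r) hy
  by_cases hv : v ∈ S
  · rw [← Finset.prod_erase_mul _ _ hv, mul_smul]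
    exact smul_le_one _ (hdx v hv a)
  · exact smul_le_one _ (hloc v hv a)

end Adic

end CommonDenominator

section OrbitLattice

variable {A F Γ ι : Type*} [CommRing A] [Field F] [Algebra A F] [Monoid Γ] [Fintype ι]
  [DecidableEq ι]

/-- The smallest `A`-submodule of `F^ι` which contains the standard basis vectors and is stable
under the representation `ρ`: the columns of `ρ γ` are the translates of the standard basis
by `γ`. -/
def orbitLattice (A : Type*) [CommRing A] [Algebra A F] (ρ : Γ →* Matrix ι ι F) :
    Submodule A (ι → F) :=
  Submodule.span A (Set.range fun p : Γ × ι ↦ (ρ p.1).col p.2)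

variable {ρ : Γ →* Matrix ι ι F}

theorem mulVec_mem_orbitLattice (γ : Γ) {x : ι → F} (hx : x ∈ orbitLattice A ρ) :
    ρ γ *ᵥ x ∈ orbitLattice A ρ := by
  suffices h : orbitLattice A ρ ≤
      (orbitLattice A ρ).comap ((ρ γ).mulVecLin.restrictScalars A) from h hx
  refine Submodule.span_le.2 ?_
  rintro _ ⟨⟨γ', i⟩, rfl⟩
  exact Submodule.subset_span ⟨(γ * γ', i), congr(($(map_mul ρ γ γ')).col i)⟩

theorem span_orbitLattice : Submodule.span F (orbitLattice A ρ : Set (ι → F)) = ⊤ := by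
  rw [orbitLattice, Submodule.span_span_of_tower, eq_top_iff, ← (Pi.basisFun F ι).span_eq]
  refine Submodule.span_mono ?_
  rintro _ ⟨i, rfl⟩
  exact ⟨(1, i), by ext j; simp [one_apply, Pi.single_apply]⟩

theorem orbitLattice_fg [IsNoetherianRing A] [FaithfulSMul A F]
    (h : HasCommonDenominator A fun p : Γ × ι × ι ↦ ρ p.1 p.2.1 p.2.2) :
    (orbitLattice A ρ).FG := by
  obtain ⟨d, hd, hint⟩ := h
  have hd' : algebraMap A F d ≠ 0 := by simpa using hd
  let scale : (ι → A) →ₗ[A] ι → F :=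
    ((algebraMap A F d)⁻¹ • Algebra.linearMap A F).compLeft ι
  have hle : orbitLattice A ρ ≤ LinearMap.range scale := by
    refine Submodule.span_le.2 ?_
    rintro _ ⟨⟨γ, j⟩, rfl⟩
    choose z hz using fun i ↦ hint (γ, i, j)
    refine ⟨z, funext fun i ↦ ?_⟩
    change (algebraMap A F d)⁻¹ * algebraMap A F (z i) = ρ γ i j
    rw [hz, Algebra.smul_def, inv_mul_cancel_left₀ hd']
  have : IsNoetherian A (orbitLattice A ρ) := isNoetherian_of_le hle
  exact Module.Finite.iff_fg.1 inferInstance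

theorem fg_span_image {A B V W : Type*} [CommRing A] [CommRing B] [Algebra A B]
    [AddCommGroup V] [Module A V] [AddCommGroup W] [Module A W] [Module B W] [IsScalarTower A B W]
    (f : V →ₗ[A] W) {s : Set V} (hs : (Submodule.span A s).FG) :
    (Submodule.span B (f '' s)).FG := by
  obtain ⟨t, ht⟩ := hs
  classical
  refine ⟨t.image f, ?_⟩
  rw [Finset.coe_image, ← Submodule.span_span_of_tower A B, ← Submodule.map_span, ht,
    Submodule.map_span, Submodule.span_span_of_tower]

theorem orbitLattice_map_fg (B : Type*) {E : Type*} [CommRing B] [Field E] [Algebra A B]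
    [Algebra B E] [Algebra F E] [Algebra A E] [IsScalarTower A B E] [IsScalarTower A F E]
    (h : (orbitLattice A ρ).FG) :
    (orbitLattice B ((algebraMap F E).mapMatrix.toMonoidHom.comp ρ)).FG := by
  have hfg := fg_span_image (B := B) (((Algebra.linearMap F E).restrictScalars A).compLeft ι) h
  rwa [← Set.range_comp] at hfg

end OrbitLattice

theorem exists_intermediateField_map_eq {K Ω ι : Type*} [Field K] [Field Ω] [Algebra K Ω]
    [Algebra.IsAlgebraic K Ω] [Fintype ι] [DecidableEq ι] (g : GL ι Ω) :
    ∃ L : IntermediateField K Ω, FiniteDimensional K L ∧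
      ∃ g' : GL ι L, GeneralLinearGroup.map (algebraMap L Ω) g' = g := by
  let entries : Set Ω := Set.range fun p : ι × ι ↦ (g : Matrix ι ι Ω) p.1 p.2
  let L := IntermediateField.adjoin K entries
  let M : Matrix ι ι L := of fun i j ↦ ⟨g i j, IntermediateField.subset_adjoin K _ ⟨(i, j), rfl⟩⟩
  have hM : (algebraMap L Ω).mapMatrix M = g := rfl
  have hdet : M.det ≠ 0 := fun h ↦ by
    apply g.det_ne_zero
    rw [← hM, ← RingHom.map_det, h, map_zero]
  exact ⟨L, IntermediateField.finiteDimensional_adjoin fun z _ ↦ Algebra.IsIntegral.isIntegral z,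
    .mkOfDetNeZero M hdet, Units.ext hM⟩

section NumberField

variable {K : Type u} [Field K] [NumberField K] {Γ ι : Type*} [Monoid Γ] [Fintype ι] [DecidableEq ι]
  {ρ : Γ →* Matrix ι ι K}

theorem exists_conj_isIntegral_of_isAlgClosed (Ω : Type*) [Field Ω] [IsAlgClosed Ω] [Algebra K Ω]
    [Algebra.IsAlgebraic K Ω]
    (h : HasCommonDenominator (𝓞 K) fun p : Γ × ι × ι ↦ ρ p.1 p.2.1 p.2.2) :
    ∃ g : GL ι Ω, ∀ γ i j,
      IsIntegral ℤ ((g * (ρ γ).map (algebraMap K Ω) * g⁻¹ : Matrix ι ι Ω) i j) := by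
  have : CharZero Ω := charZero_of_injective_algebraMap (algebraMap K Ω).injective
  have : Algebra.IsAlgebraic ℚ Ω := .trans ℚ K Ω
  have := isFractionRing_ringOfIntegers (Ω := Ω)
  have := isBezout_ringOfIntegers (Ω := Ω)
  let N := orbitLattice (𝓞 Ω) ((algebraMap K Ω).mapMatrix.toMonoidHom.comp ρ)
  have hN : N.FG := orbitLattice_map_fg (𝓞 Ω) (orbitLattice_fg h)
  have : Submodule.IsLattice Ω N := ⟨hN, span_orbitLattice⟩
  have : Module.Free (𝓞 Ω) N := free_of_fg_of_finiteDimensional (F := Ω) N hN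
  obtain ⟨g, hg⟩ := exists_conj_isInteger_of_isLattice N
  refine ⟨g, fun γ i j ↦ ?_⟩
  obtain ⟨z, hz⟩ := hg _ (fun _ hx ↦ mulVec_mem_orbitLattice γ hx) i j
  exact hz ▸ z.isIntegral_coe

theorem exists_numberField_conj_isIntegral
    (h : HasCommonDenominator (𝓞 K) fun p : Γ × ι × ι ↦ ρ p.1 p.2.1 p.2.2) :
    ∃ (L : Type u) (_ : Field L) (_ : NumberField L) (_ : Algebra K L), FiniteDimensional K L ∧
      ∃ g : GL ι L, ∀ γ i j,
        IsIntegral ℤ ((g * (ρ γ).map (algebraMap K L) * g⁻¹ : Matrix ι ι L) i j) := by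
  let Ω := AlgebraicClosure K
  obtain ⟨g, hg⟩ := exists_conj_isIntegral_of_isAlgClosed Ω h
  obtain ⟨L, hL, g', rfl⟩ := exists_intermediateField_map_eq (K := K) g
  refine ⟨L, inferInstance, .of_module_finite K L, inferInstance, hL, g', fun γ i j ↦ ?_⟩
  rw [← isIntegral_algebraMap_iff (algebraMap L Ω).injective]
  have hmap : (g' * (ρ γ).map (algebraMap K L) * g'⁻¹ : Matrix ι ι L).map (algebraMap L Ω) =
      (GeneralLinearGroup.map (algebraMap L Ω) g' * (ρ γ).map (algebraMap K Ω) *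
        (GeneralLinearGroup.map (algebraMap L Ω) g')⁻¹ : Matrix ι ι Ω) := by
    rw [Matrix.map_mul, Matrix.map_mul]
    rfl
  rw [← Matrix.map_apply (f := algebraMap L Ω), hmap]
  exact hg γ i j

end NumberField

theorem valuation_le_one_of_exists_eq_div {R K : Type*} [CommRing R] [IsDedekindDomain R] [Field K]
    [Algebra R K] [IsFractionRing R K] {v : HeightOneSpectrum R} {x : K}
    (hx : ∃ a b : R, b ∉ v.asIdeal ∧ x = algebraMap R K a / algebraMap R K b) :
    v.valuation K x ≤ 1 := by
  obtain ⟨a, b, hb, rfl⟩ := hx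
  rw [map_div₀, (v.valuation_eq_one_iff_notMem).2 hb, div_one]
  exact v.valuation_le_one a

theorem isIntegral_of_exists_monic_coeff_mem {F E : Type*} [Field F] [CommRing E] [Algebra F E]
    {O : ValuationSubring F} [Algebra O E] [IsScalarTower O F E] {x : E}
    (hx : ∃ P : Polynomial F, P.Monic ∧ (∀ k, P.coeff k ∈ O) ∧ P.aeval x = 0) :
    IsIntegral O x := by
  obtain ⟨P, hP, hcoeff, hroot⟩ := hx
  obtain ⟨Q, rfl, -, hQ⟩ := Polynomial.lifts_and_natDegree_eq_and_monic
    ((Polynomial.lifts_iff_coeff_lifts (f := algebraMap O F) P).2 fun k ↦ ⟨⟨_, hcoeff k⟩, rfl⟩) hP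
  exact ⟨Q, hQ, by rwa [Polynomial.aeval_map_algebraMap] at hroot⟩

theorem stmt_0_general {K : Type u} [Field K] [NumberField K] {Γ ι : Type*} [Monoid Γ] [Fintype ι]
    [DecidableEq ι] (ρ : Γ →* Matrix ι ι K) (S : Finset (HeightOneSpectrum (𝓞 K)))
    (hloc : ∀ v ∉ S, ∀ γ i j, v.valuation K (ρ γ i j) ≤ 1)
    (hS : ∀ v ∈ S, ∃ g : GL ι (AlgebraicClosure (v.adicCompletion K)), ∀ γ i j,
      IsIntegral (v.adicCompletionIntegers K)
        ((g * (ρ γ).map (algebraMap K (AlgebraicClosure (v.adicCompletion K))) * g⁻¹ :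
          Matrix ι ι (AlgebraicClosure (v.adicCompletion K))) i j)) :
    ∃ (L : Type u) (_ : Field L) (_ : NumberField L) (_ : Algebra K L), FiniteDimensional K L ∧
      ∃ g : GL ι L, ∀ γ i j,
        IsIntegral ℤ ((g * (ρ γ).map (algebraMap K L) * g⁻¹ : Matrix ι ι L) i j) := by
  refine exists_numberField_conj_isIntegral
    (hasCommonDenominator_of_adic S (fun v hv p ↦ hloc v hv p.1 p.2.1 p.2.2) fun v hv ↦ ?_)
  obtain ⟨g, hg⟩ := hS v hv
  exact hasCommonDenominator_of_isIntegral_conj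
    (fun γ ↦ (ρ γ).map (algebraMap K (v.adicCompletion K))) g hg

/-- local integrality criterion, `GL_n` case.  Let `K` be a number field,
`S` a finite set of nonzero primes of `𝓞_K` (elements of the height-one spectrum), `Γ` a
finitely generated group and `ρ : Γ → GL_n(K)` a homomorphism whose matrix entries (and
those of the inverses) are `p`-integral for every nonzero prime `p ∉ S`.  If for each
`p ∈ S` the representation can be conjugated, over an algebraic closure of the completion
`K_p`, into matrices with entries integral over the valuation ring `𝓞_{K_p}`, then there
is a finite extension of number fields `L/K` over which `ρ` can be conjugated into
matrices with entries (and inverse entries) in `𝓞_L` (i.e. integral over `ℤ`). -/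
theorem stmt_0 (K : Type) [Field K] [NumberField K] (n : ℕ)
    (S : Finset (HeightOneSpectrum (𝓞 K)))
    (Γ : Type) [Group Γ] [Group.FG Γ] (ρ : Γ →* GL (Fin n) K)
    -- integrality away from `S`: every entry of `ρ(γ)` and `ρ(γ)⁻¹` lies in the
    -- localization of `𝓞_K` at `p`, i.e. can be written `a/b` with `b ∉ p`
    (hloc : ∀ v : HeightOneSpectrum (𝓞 K), v ∉ S → ∀ (γ : Γ) (i j : Fin n),
      (∃ a b : 𝓞 K, b ∉ v.asIdeal ∧
        (ρ γ : Matrix (Fin n) (Fin n) K) i j =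
          algebraMap (𝓞 K) K a / algebraMap (𝓞 K) K b) ∧
      (∃ a b : 𝓞 K, b ∉ v.asIdeal ∧
        ((ρ γ)⁻¹ : Matrix (Fin n) (Fin n) K) i j =
          algebraMap (𝓞 K) K a / algebraMap (𝓞 K) K b))
    -- integrality after conjugation at each `p ∈ S`, over an algebraic closure of the
    -- completion `K_p`: each entry of `g·ρ(γ)·g⁻¹` is a root of a monic polynomial with
    -- coefficients in the valuation ring `𝓞_{K_p}`
    (hS : ∀ v ∈ S,
      ∃ g : GL (Fin n) (AlgebraicClosure (v.adicCompletion K)),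
        ∀ (γ : Γ) (i j : Fin n),
          ∃ P : Polynomial (v.adicCompletion K), P.Monic ∧
            (∀ k : ℕ, P.coeff k ∈ v.adicCompletionIntegers K) ∧
            Polynomial.aeval
              (((g * Units.map (RingHom.mapMatrix
                    (algebraMap K (AlgebraicClosure (v.adicCompletion K)))).toMonoidHom
                      (ρ γ) * g⁻¹ :
                  GL (Fin n) (AlgebraicClosure (v.adicCompletion K))) :
                Matrix (Fin n) (Fin n) (AlgebraicClosure (v.adicCompletion K))) i j)
              P = 0) :
    ∃ (L : Type) (_ : Field L) (_ : NumberField L) (_ : Algebra K L),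
      FiniteDimensional K L ∧
      ∃ g : GL (Fin n) L, ∀ (γ : Γ) (i j : Fin n),
        IsIntegral ℤ
          (((g * Units.map (RingHom.mapMatrix (algebraMap K L)).toMonoidHom (ρ γ) * g⁻¹ :
              GL (Fin n) L) : Matrix (Fin n) (Fin n) L) i j) ∧
        IsIntegral ℤ
          ((((g * Units.map (RingHom.mapMatrix (algebraMap K L)).toMonoidHom (ρ γ) * g⁻¹)⁻¹ :
              GL (Fin n) L) : Matrix (Fin n) (Fin n) L) i j) := by
  obtain ⟨L, _, _, _, hL, g, hg⟩ := stmt_0_general ((Units.coeHom _).comp ρ) S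
    (fun v hv γ i j ↦ valuation_le_one_of_exists_eq_div (hloc v hv γ i j).1)
    fun v hv ↦ (hS v hv).imp fun g hg γ i j ↦ isIntegral_of_exists_monic_coeff_mem (hg γ i j)
  exact ⟨L, _, ‹_›, _, hL, g, fun γ i j ↦ ⟨hg γ i j, by simpa [mul_assoc] using hg γ⁻¹ i j⟩⟩
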